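/- Let k ∈ (0,1). The function ζ(α) := ((1+k)/2)·(1 − k·sn(α;k)²)/(1 + k·sn(α;k)²) is strictly decreasing on [0, K(k)], with ζ(0) = (1+k)/2 and ζ(K(k)) = (1−k)/2. Consequently, for every ζ in the spectral gap ((1−k)/2, (1+k)/2) there is a unique α ∈ (0, K(k)) satisfying the characteristic equation ζ = ((1+k)/2)·(1 − k·sn(α;k)²)/(1 + k·sn(α;k)²). -/

import Mathlib

noncomputable section

/-- The complete elliptic integral of the first kind. -/
def Kcomp (k : ℝ) : ℝ :=
  ∫ θ in (0 : ℝ)..(Real.pi / 2), (Real.sqrt (1 - k ^ 2 * Real.sin θ ^ 2))⁻¹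

/-- The spectral parameter determined by the characteristic equation,
`ζ(α) = ((1+k)/2)(1 − k·sn²(α))/(1 + k·sn²(α))`. -/
def zetaChar (k : ℝ) (sn : ℝ → ℝ) (α : ℝ) : ℝ :=
  ((1 + k) / 2) * (1 - k * (sn α) ^ 2) / (1 + k * (sn α) ^ 2)

/-!
Let `F(φ) = ∫₀^φ (1 - k² sin² θ)^(-1/2) dθ` and let `am(x) = ∫₀ˣ dn` be the Jacobi amplitude.
The point `(cn, sn)` moves on the unit circle with angular velocity `dn`, hence `sn = sin ∘ am`.
The first integral `dn² + k² sn² = 1` then gives `dn = √(1 - k² sin² am)`, so that `F ∘ am` has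
derivative `1` and `F (am x) = x`. As `F` is injective, `am K = π / 2`; thus `sn` increases strictly
from `0` to `1` on `[0, K]`, and `ζ` is a strictly decreasing function of `sn²`.
-/

open Real Set

section Calculus

theorem eq_of_hasDerivAt_zero {𝕜 E : Type*} [RCLike 𝕜] [NormedAddCommGroup E] [NormedSpace 𝕜 E]
    {f : 𝕜 → E} (hf : ∀ x, HasDerivAt f 0 x) (x y : 𝕜) : f x = f y :=
  is_const_of_deriv_eq_zero (fun z => (hf z).differentiableAt) (fun z => (hf z).deriv) x y

theorem pos_of_continuous_of_ne_zero {X : Type*} [TopologicalSpace X] [PreconnectedSpace X]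
    {α : Type*} [LinearOrder α] [TopologicalSpace α] [OrderClosedTopology α] [Zero α]
    {f : X → α} (hf : Continuous f) (hne : ∀ x, f x ≠ 0) {x₀ : X} (hx₀ : 0 < f x₀) (x : X) :
    0 < f x := by
  by_contra! hx
  obtain ⟨y, hy⟩ := mem_range_of_exists_le_of_exists_ge hf ⟨x, hx⟩ ⟨x₀, hx₀.le⟩
  exact hne y hy

theorem existsUnique_mem_Ioo_of_strictAntiOn {α β : Type*} [ConditionallyCompleteLinearOrder α]
    [TopologicalSpace α] [OrderTopology α] [DenselyOrdered α] [LinearOrder β] [TopologicalSpace β]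
    [OrderClosedTopology β] {f : α → β} {a b : α} (hab : a ≤ b)
    (hanti : StrictAntiOn f (Icc a b)) (hcont : ContinuousOn f (Icc a b)) {y : β}
    (hy : y ∈ Ioo (f b) (f a)) : ∃! x, x ∈ Ioo a b ∧ y = f x := by
  obtain ⟨x, hx, rfl⟩ := intermediate_value_Ioo' hab hcont hy
  exact ⟨x, ⟨hx, rfl⟩, fun z ⟨hz, hxz⟩ =>
    (hanti.injOn (Ioo_subset_Icc_self hx) (Ioo_subset_Icc_self hz) hxz).symm⟩

end Calculus

section EllipticIntegral

/-- The incomplete elliptic integral of the first kind `F(φ, k)`, as a function of the amplitude `φ`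
and the modulus `k` (not the parameter `m = k²`). -/
def ellipticF (k φ : ℝ) : ℝ :=
  ∫ θ in (0 : ℝ)..φ, (√(1 - k ^ 2 * sin θ ^ 2))⁻¹

theorem ellipticF_zero (k : ℝ) : ellipticF k 0 = 0 :=
  intervalIntegral.integral_same

theorem ellipticF_pi_div_two (k : ℝ) : ellipticF k (π / 2) = Kcomp k :=
  rfl

variable {k : ℝ}

theorem one_sub_sq_mul_sin_sq_pos (hk : k ^ 2 < 1) (θ : ℝ) : 0 < 1 - k ^ 2 * sin θ ^ 2 :=
  sub_pos.2 <| (mul_le_of_le_one_right (sq_nonneg k) (sin_sq_le_one θ)).trans_lt hk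

theorem hasDerivAt_ellipticF (hk : k ^ 2 < 1) (φ : ℝ) :
    HasDerivAt (ellipticF k) (√(1 - k ^ 2 * sin φ ^ 2))⁻¹ φ := by
  have integrand_continuous : Continuous fun θ => (√(1 - k ^ 2 * sin θ ^ 2))⁻¹ :=
    Continuous.inv₀ (by fun_prop) fun θ => (sqrt_pos.2 (one_sub_sq_mul_sin_sq_pos hk θ)).ne'
  exact (integrand_continuous.integral_hasStrictDerivAt 0 φ).hasDerivAt

theorem strictMono_ellipticF (hk : k ^ 2 < 1) : StrictMono (ellipticF k) :=
  strictMono_of_hasDerivAt_pos (hasDerivAt_ellipticF hk) fun φ =>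
    inv_pos.2 (sqrt_pos.2 (one_sub_sq_mul_sin_sq_pos hk φ))

theorem Kcomp_pos (hk : k ^ 2 < 1) : 0 < Kcomp k := by
  rw [← ellipticF_zero k, ← ellipticF_pi_div_two]
  exact strictMono_ellipticF hk pi_div_two_pos

end EllipticIntegral

/-- The Jacobi elliptic functions of modulus `k`, characterised as a global solution of their
defining initial value problem. -/
structure IsJacobiTriple (k : ℝ) (sn cn dn : ℝ → ℝ) : Prop where
  hasDerivAt_sn : ∀ x, HasDerivAt sn (cn x * dn x) x
  hasDerivAt_cn : ∀ x, HasDerivAt cn (-(sn x * dn x)) x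
  hasDerivAt_dn : ∀ x, HasDerivAt dn (-(k ^ 2 * sn x * cn x)) x
  sn_zero : sn 0 = 0
  cn_zero : cn 0 = 1
  dn_zero : dn 0 = 1

/-- The Jacobi amplitude `am`, as the primitive of the delta amplitude `dn` vanishing at `0`. -/
def jacobiAmplitude (dn : ℝ → ℝ) (x : ℝ) : ℝ :=
  ∫ t in (0 : ℝ)..x, dn t

theorem jacobiAmplitude_zero (dn : ℝ → ℝ) : jacobiAmplitude dn 0 = 0 :=
  intervalIntegral.integral_same

theorem hasDerivAt_jacobiAmplitude {dn : ℝ → ℝ} (hdn : Continuous dn) (x : ℝ) :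
    HasDerivAt (jacobiAmplitude dn) (dn x) x :=
  (hdn.integral_hasStrictDerivAt 0 x).hasDerivAt

namespace IsJacobiTriple

variable {k : ℝ} {sn cn dn : ℝ → ℝ}

theorem continuous_sn (h : IsJacobiTriple k sn cn dn) : Continuous sn :=
  continuous_iff_continuousAt.2 fun x => (h.hasDerivAt_sn x).continuousAt

theorem continuous_dn (h : IsJacobiTriple k sn cn dn) : Continuous dn :=
  continuous_iff_continuousAt.2 fun x => (h.hasDerivAt_dn x).continuousAt

theorem dn_sq_add_sq_mul_sn_sq (h : IsJacobiTriple k sn cn dn) (x : ℝ) :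
    dn x ^ 2 + k ^ 2 * sn x ^ 2 = 1 := by
  have deriv_eq_zero (y : ℝ) : HasDerivAt (fun t => dn t ^ 2 + k ^ 2 * sn t ^ 2) 0 y := by
    refine (((h.hasDerivAt_dn y).fun_pow 2).add
      (((h.hasDerivAt_sn y).fun_pow 2).const_mul (k ^ 2))).congr_deriv ?_
    ring
  simpa [h.sn_zero, h.dn_zero] using eq_of_hasDerivAt_zero deriv_eq_zero x 0

-- `(cn, sn)` and `(cos am, sin am)` rotate at the same rate `dn`, so their distance is conserved.
theorem sq_sub_sin_add_sq_sub_cos_eq_zero (h : IsJacobiTriple k sn cn dn) (x : ℝ) :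
    (sn x - sin (jacobiAmplitude dn x)) ^ 2 + (cn x - cos (jacobiAmplitude dn x)) ^ 2 = 0 := by
  have deriv_eq_zero (y : ℝ) : HasDerivAt (fun t => (sn t - sin (jacobiAmplitude dn t)) ^ 2 +
      (cn t - cos (jacobiAmplitude dn t)) ^ 2) 0 y := by
    have ham := hasDerivAt_jacobiAmplitude h.continuous_dn y
    refine ((((h.hasDerivAt_sn y).sub ham.sin).fun_pow 2).add
      (((h.hasDerivAt_cn y).sub ham.cos).fun_pow 2)).congr_deriv ?_
    simp only [Pi.sub_apply]
    ring
  simpa [h.sn_zero, h.cn_zero, jacobiAmplitude_zero] using eq_of_hasDerivAt_zero deriv_eq_zero x 0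

theorem sn_eq_sin_jacobiAmplitude (h : IsJacobiTriple k sn cn dn) (x : ℝ) :
    sn x = sin (jacobiAmplitude dn x) := by
  have sq_nonpos : (sn x - sin (jacobiAmplitude dn x)) ^ 2 ≤ 0 := by
    linarith [h.sq_sub_sin_add_sq_sub_cos_eq_zero x, sq_nonneg (cn x - cos (jacobiAmplitude dn x))]
  exact sub_eq_zero.1 (sq_nonpos_iff _ |>.1 sq_nonpos)

theorem dn_sq_eq_one_sub (h : IsJacobiTriple k sn cn dn) (x : ℝ) :
    dn x ^ 2 = 1 - k ^ 2 * sin (jacobiAmplitude dn x) ^ 2 := by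
  rw [← h.sn_eq_sin_jacobiAmplitude]
  exact eq_sub_of_add_eq (h.dn_sq_add_sq_mul_sn_sq x)

theorem dn_pos (h : IsJacobiTriple k sn cn dn) (hk : k ^ 2 < 1) (x : ℝ) : 0 < dn x := by
  have dn_ne_zero (y : ℝ) : dn y ≠ 0 := by
    have dn_sq_pos : 0 < dn y ^ 2 := h.dn_sq_eq_one_sub y ▸ one_sub_sq_mul_sin_sq_pos hk _
    exact pow_ne_zero_iff two_ne_zero |>.1 dn_sq_pos.ne'
  exact pos_of_continuous_of_ne_zero h.continuous_dn dn_ne_zero (h.dn_zero ▸ one_pos) x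

theorem sqrt_one_sub_sq_mul_sin_jacobiAmplitude_sq (h : IsJacobiTriple k sn cn dn)
    (hk : k ^ 2 < 1) (x : ℝ) : √(1 - k ^ 2 * sin (jacobiAmplitude dn x) ^ 2) = dn x := by
  rw [← h.dn_sq_eq_one_sub, sqrt_sq (h.dn_pos hk x).le]

theorem strictMono_jacobiAmplitude (h : IsJacobiTriple k sn cn dn) (hk : k ^ 2 < 1) :
    StrictMono (jacobiAmplitude dn) :=
  strictMono_of_hasDerivAt_pos (hasDerivAt_jacobiAmplitude h.continuous_dn) (h.dn_pos hk)

theorem ellipticF_jacobiAmplitude (h : IsJacobiTriple k sn cn dn) (hk : k ^ 2 < 1) (x : ℝ) :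
    ellipticF k (jacobiAmplitude dn x) = x := by
  have deriv_eq_zero (y : ℝ) :
      HasDerivAt (fun t => ellipticF k (jacobiAmplitude dn t) - t) 0 y := by
    refine (((hasDerivAt_ellipticF hk _).comp y
      (hasDerivAt_jacobiAmplitude h.continuous_dn y)).sub (hasDerivAt_id y)).congr_deriv ?_
    rw [h.sqrt_one_sub_sq_mul_sin_jacobiAmplitude_sq hk, inv_mul_cancel₀ (h.dn_pos hk y).ne',
      sub_self]
  have eq_at_zero := eq_of_hasDerivAt_zero deriv_eq_zero x 0
  rwa [jacobiAmplitude_zero, ellipticF_zero, sub_zero, sub_eq_zero] at eq_at_zero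

theorem jacobiAmplitude_Kcomp (h : IsJacobiTriple k sn cn dn) (hk : k ^ 2 < 1) :
    jacobiAmplitude dn (Kcomp k) = π / 2 :=
  (strictMono_ellipticF hk).injective <| by
    rw [h.ellipticF_jacobiAmplitude hk, ellipticF_pi_div_two]

theorem sn_Kcomp (h : IsJacobiTriple k sn cn dn) (hk : k ^ 2 < 1) : sn (Kcomp k) = 1 := by
  rw [h.sn_eq_sin_jacobiAmplitude, h.jacobiAmplitude_Kcomp hk, sin_pi_div_two]

theorem strictMonoOn_sn (h : IsJacobiTriple k sn cn dn) (hk : k ^ 2 < 1) :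
    StrictMonoOn sn (Icc 0 (Kcomp k)) := by
  have am_strictMono := h.strictMono_jacobiAmplitude hk
  have am_mapsTo : MapsTo (jacobiAmplitude dn) (Icc 0 (Kcomp k)) (Icc (-(π / 2)) (π / 2)) := by
    intro x hx
    have am_nonneg := am_strictMono.monotone hx.1
    have am_le := am_strictMono.monotone hx.2
    rw [jacobiAmplitude_zero] at am_nonneg
    rw [h.jacobiAmplitude_Kcomp hk] at am_le
    exact ⟨by linarith [pi_pos], am_le⟩
  rw [funext h.sn_eq_sin_jacobiAmplitude]
  exact strictMonoOn_sin.comp (am_strictMono.strictMonoOn _) am_mapsTo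

theorem strictMonoOn_sn_sq (h : IsJacobiTriple k sn cn dn) (hk : k ^ 2 < 1) :
    StrictMonoOn (fun x => sn x ^ 2) (Icc 0 (Kcomp k)) := by
  intro x hx y hy hxy
  have sn_nonneg : 0 ≤ sn x := h.sn_zero ▸
    (h.strictMonoOn_sn hk).monotoneOn (left_mem_Icc.2 (Kcomp_pos hk).le) hx hx.1
  exact pow_lt_pow_left₀ (h.strictMonoOn_sn hk hx hy hxy) sn_nonneg two_ne_zero

end IsJacobiTriple

section CharacteristicMap

variable {k : ℝ} {sn : ℝ → ℝ}

theorem zetaChar_eq_of_sn_eq_zero {α : ℝ} (hα : sn α = 0) : zetaChar k sn α = (1 + k) / 2 := by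
  simp [zetaChar, hα]

theorem zetaChar_eq_of_sn_eq_one {α : ℝ} (hk : 1 + k ≠ 0) (hα : sn α = 1) :
    zetaChar k sn α = (1 - k) / 2 := by
  simp only [zetaChar, hα]
  field_simp

theorem zetaChar_lt_zetaChar {α β : ℝ} (hk : 0 < k) (hαβ : sn α ^ 2 < sn β ^ 2) :
    zetaChar k sn β < zetaChar k sn α := by
  have den_pos (x : ℝ) : 0 < 1 + k * sn x ^ 2 := by positivity
  have gap_pos : 0 < (1 + k) * k * (sn β ^ 2 - sn α ^ 2) :=
    mul_pos (by positivity) (sub_pos.2 hαβ)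
  rw [zetaChar, zetaChar, div_lt_div_iff₀ (den_pos β) (den_pos α)]
  linarith

theorem continuous_zetaChar (hk : 0 ≤ k) (hsn : Continuous sn) : Continuous (zetaChar k sn) := by
  unfold zetaChar
  exact Continuous.div (by fun_prop) (by fun_prop) fun x => by positivity

end CharacteristicMap

/-- The characteristic map `α ↦ ζ(α)` is strictly decreasing on `[0, K(k)]`, with
`ζ(0) = (1+k)/2` and `ζ(K(k)) = (1−k)/2`; consequently every `ζ` in the spectral gap
`((1−k)/2, (1+k)/2)` is attained by a unique `α ∈ (0, K(k))`. -/
theorem characteristic_equation_unique_solution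
    (k : ℝ) (hk : k ∈ Set.Ioo (0 : ℝ) 1)
    (sn cn dn : ℝ → ℝ)
    (hsn : ∀ x, HasDerivAt sn (cn x * dn x) x)
    (hcn : ∀ x, HasDerivAt cn (-(sn x * dn x)) x)
    (hdn : ∀ x, HasDerivAt dn (-(k ^ 2 * sn x * cn x)) x)
    (hsn0 : sn 0 = 0) (hcn0 : cn 0 = 1) (hdn0 : dn 0 = 1) :
    StrictAntiOn (zetaChar k sn) (Set.Icc 0 (Kcomp k)) ∧
    zetaChar k sn 0 = (1 + k) / 2 ∧
    zetaChar k sn (Kcomp k) = (1 - k) / 2 ∧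
    ∀ ζ ∈ Set.Ioo ((1 - k) / 2) ((1 + k) / 2),
      ∃! α, α ∈ Set.Ioo 0 (Kcomp k) ∧ ζ = zetaChar k sn α := by
  obtain ⟨hk_pos, hk_lt_one⟩ := hk
  have hk_sq : k ^ 2 < 1 := (sq_lt_one_iff₀ hk_pos.le).2 hk_lt_one
  have h : IsJacobiTriple k sn cn dn := ⟨hsn, hcn, hdn, hsn0, hcn0, hdn0⟩
  have zeta_anti : StrictAntiOn (zetaChar k sn) (Set.Icc 0 (Kcomp k)) := fun α hα β hβ hαβ =>
    zetaChar_lt_zetaChar hk_pos (h.strictMonoOn_sn_sq hk_sq hα hβ hαβ)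
  have zeta_zero : zetaChar k sn 0 = (1 + k) / 2 := zetaChar_eq_of_sn_eq_zero h.sn_zero
  have zeta_K : zetaChar k sn (Kcomp k) = (1 - k) / 2 :=
    zetaChar_eq_of_sn_eq_one (by positivity) (h.sn_Kcomp hk_sq)
  have zeta_cont : Continuous (zetaChar k sn) := continuous_zetaChar hk_pos.le h.continuous_sn
  refine ⟨zeta_anti, zeta_zero, zeta_K, fun ζ hζ => ?_⟩
  rw [← zeta_K, ← zeta_zero] at hζ
  exact existsUnique_mem_Ioo_of_strictAntiOn (Kcomp_pos hk_sq).le zeta_anti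
    zeta_cont.continuousOn hζ

end
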